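/- Every (bull, diamond)-free minimally non-perfectly divisible graph is triangle-free. -/

import Mathlib

/-!
Suppose a (bull, diamond)-free minimally non-perfectly divisible graph `G` has a triangle, and let
`K` be an inclusion-maximal clique containing it. By diamond-freeness a vertex outside `K` has at
most one neighbour in `K`; by bull-freeness (and `3 ≤ |K|`) outside neighbours of two different
vertices of `K` are adjacent.

Adding a simplicial vertex to a perfect graph keeps it perfect (`Perf.insert`). Hence if some
vertex `k` of `K` has no neighbour outside `K`, a partition `(A, B)` of `G - k` extends to the
partition `(A ∪ {k}, B)` of `G`, a contradiction (`no_simplicial`).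

Otherwise every vertex of `K` has an outside neighbour, and diamond-freeness then makes it unique.
Take a partition `(A, B)` of `G - K` and a vertex `k` of `K`. Now `k` has at most one neighbour in
`A`, so `A ∪ {k}` is perfect, and a clique of `B ∪ (K \ {k})` lies in `B`, lies in `K \ {k}`, or has
at most two vertices; so `(A ∪ {k}, B ∪ (K \ {k}))` is a valid partition of `G`
(`no_clique_with_matching`).
-/

open SimpleGraph

/-- `H` is isomorphic to an induced subgraph of `G`. -/
def ContainsInduced {α β : Type*} (G : SimpleGraph α) (H : SimpleGraph β) : Prop :=
  ∃ f : β ↪ α, ∀ a b, G.Adj (f a) (f b) ↔ H.Adj a b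

/-- `G` is `H`-free: `G` does not contain `H` as an induced subgraph. -/
def IsFree {α β : Type*} (G : SimpleGraph α) (H : SimpleGraph β) : Prop :=
  ¬ ContainsInduced G H

/-- The clique number of the subgraph of `G` induced on `s`. -/
noncomputable def cliqueNumOn {V : Type*} (G : SimpleGraph V) (s : Set V) : ℕ :=
  sSup {n | ∃ t : Finset V, ↑t ⊆ s ∧ G.IsNClique n t}

/-- The maximum `w`-weight of a clique of `G` contained in `s`. -/
noncomputable def wCliqueNumOn {V : Type*} (G : SimpleGraph V) (w : V → ℕ) (s : Set V) : ℕ :=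
  sSup {n | ∃ t : Finset V, ↑t ⊆ s ∧ G.IsClique (↑t : Set V) ∧ ∑ v ∈ t, w v = n}

/-- A graph is perfect if every induced subgraph has chromatic number equal to clique number. -/
def IsPerfect {V : Type*} (G : SimpleGraph V) : Prop :=
  ∀ s : Set V, (G.induce s).chromaticNumber = (cliqueNumOn G s : ℕ∞)

/-- `G` is perfectly divisible: every (nonempty) induced subgraph `H` of `G` admits a partition
`(A, B)` of its vertex set with `H[A]` perfect and `ω(H[B]) < ω(H)`. -/
def PerfectlyDivisible {V : Type*} (G : SimpleGraph V) : Prop :=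
  ∀ s : Set V, s.Nonempty →
    ∃ A B : Set V, A ∪ B = s ∧ A ∩ B = ∅ ∧
      IsPerfect (G.induce A) ∧ cliqueNumOn G B < cliqueNumOn G s

/-- `G` is perfectly weight divisible: for every positive integer weight function `w` and every
(nonempty) induced subgraph `H` of `G`, there is a partition `(P, W)` of its vertex set with
`H[P]` perfect and the maximum weight of a clique of `H[W]` less than that of `H`. -/
def PerfectlyWeightDivisible {V : Type*} (G : SimpleGraph V) : Prop :=
  ∀ w : V → ℕ, (∀ v, 0 < w v) →
    ∀ s : Set V, s.Nonempty →
      ∃ P W : Set V, P ∪ W = s ∧ P ∩ W = ∅ ∧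
        IsPerfect (G.induce P) ∧ wCliqueNumOn G w W < wCliqueNumOn G w s

/-- The bull: a triangle `{0,1,2}` with pendant edges `0-3` and `1-4`. -/
def bull : SimpleGraph (Fin 5) :=
  SimpleGraph.fromEdgeSet {s(0,1), s(0,2), s(1,2), s(0,3), s(1,4)}

/-- The house: the complement of the path on 5 vertices. -/
def house : SimpleGraph (Fin 5) := (SimpleGraph.pathGraph 5)ᶜ

/-- The hammer: a triangle `{0,1,2}` together with the path `2-3-4`. -/
def hammer : SimpleGraph (Fin 5) :=
  SimpleGraph.fromEdgeSet {s(0,1), s(0,2), s(1,2), s(2,3), s(3,4)}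

/-- The diamond: `K₄` minus an edge. -/
def diamond : SimpleGraph (Fin 4) :=
  SimpleGraph.fromEdgeSet {s(0,1), s(0,2), s(0,3), s(1,2), s(1,3)}

/-- The odd torch built on the cycle `C_k` from a set `S` of cycle vertices: two new adjacent
vertices are added, the first adjacent exactly to `S`, the second to no cycle vertex. -/
def oddTorch (k : ℕ) (S : Set (Fin k)) : SimpleGraph (Fin k ⊕ Fin 2) :=
  SimpleGraph.fromRel (fun a b =>
    match a, b with
    | Sum.inl i, Sum.inl j => (SimpleGraph.cycleGraph k).Adj i j
    | Sum.inl i, Sum.inr u => u = 0 ∧ i ∈ S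
    | Sum.inr _, Sum.inl _ => False
    | Sum.inr u, Sum.inr v => u ≠ v)

/-- `G` contains no odd torch as an induced subgraph. -/
def OddTorchFree {V : Type*} (G : SimpleGraph V) : Prop :=
  ∀ (k : ℕ) (S : Set (Fin k)), 5 ≤ k → Odd k → S.Nonempty →
    (∀ i ∈ S, ∀ j ∈ S, ¬ (SimpleGraph.cycleGraph k).Adj i j) →
    IsFree G (oddTorch k S)

/-- `G` is locally perfect: the neighbourhood of each vertex induces a perfect graph. -/
def LocallyPerfect {V : Type*} (G : SimpleGraph V) : Prop :=
  ∀ v : V, IsPerfect (G.induce (G.neighborSet v))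

/-- `N(X)`: vertices outside `X` with a neighbour in `X`. -/
def nbhd {V : Type*} (G : SimpleGraph V) (X : Set V) : Set V :=
  {u | u ∉ X ∧ ∃ x ∈ X, G.Adj u x}

/-- `M(X) = V(G) \ (X ∪ N(X))`: vertices outside `X` with no neighbour in `X`. -/
def antiNbhd {V : Type*} (G : SimpleGraph V) (X : Set V) : Set V :=
  {u | u ∉ X ∧ ∀ x ∈ X, ¬ G.Adj u x}

/-- Minimally non-perfectly divisible. -/
def MNPD {V : Type*} (G : SimpleGraph V) : Prop :=
  ¬ PerfectlyDivisible G ∧ ∀ s : Set V, s ≠ Set.univ → PerfectlyDivisible (G.induce s)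

/-- Minimally non-perfectly weight divisible. -/
def MNWD {V : Type*} (G : SimpleGraph V) : Prop :=
  ¬ PerfectlyWeightDivisible G ∧ ∀ s : Set V, s ≠ Set.univ → PerfectlyWeightDivisible (G.induce s)

section Helpers

variable {V W : Type*}

/-! ### Clique numbers and perfection of vertex subsets -/

lemma bddAbove_cliqueNumOn [Fintype V] (G : SimpleGraph V) (s : Set V) :
    BddAbove {n | ∃ t : Finset V, ↑t ⊆ s ∧ G.IsNClique n t} := by
  refine ⟨Fintype.card V, ?_⟩
  rintro n ⟨t, -, ht⟩
  rw [← ht.card_eq]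
  exact Finset.card_le_univ t

lemma card_le_cliqueNumOn [Fintype V] {G : SimpleGraph V} {s : Set V} {t : Finset V}
    (hts : (t : Set V) ⊆ s) (ht : G.IsClique (t : Set V)) : t.card ≤ cliqueNumOn G s :=
  le_csSup (bddAbove_cliqueNumOn G s) ⟨t, hts, ht, rfl⟩

lemma exists_clique_card [Fintype V] (G : SimpleGraph V) (s : Set V) :
    ∃ t : Finset V, (t : Set V) ⊆ s ∧ G.IsClique (t : Set V) ∧ t.card = cliqueNumOn G s := by
  have h := Nat.sSup_mem (s := {n | ∃ t : Finset V, ↑t ⊆ s ∧ G.IsNClique n t})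
    ⟨0, ∅, by simp, by simp⟩ (bddAbove_cliqueNumOn G s)
  obtain ⟨t, h1, h2⟩ := h
  exact ⟨t, h1, h2.isClique, h2.card_eq⟩

lemma cliqueNumOn_mono [Fintype V] (G : SimpleGraph V) {s t : Set V} (h : s ⊆ t) :
    cliqueNumOn G s ≤ cliqueNumOn G t := by
  obtain ⟨c, h1, h2, h3⟩ := exists_clique_card G s
  exact h3 ▸ card_le_cliqueNumOn (h1.trans h) h2

lemma cliqueNumOn_image [Fintype V] [Fintype W] {H : SimpleGraph W} {G : SimpleGraph V}
    (e : H ↪g G) (s : Set W) : cliqueNumOn G (e '' s) = cliqueNumOn H s := by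
  classical
  apply le_antisymm
  · obtain ⟨c, h1, h2, h3⟩ := exists_clique_card G (e '' s)
    obtain ⟨d, hd, rfl⟩ := Finset.subset_set_image_iff.1 h1
    rw [← h3, Finset.card_image_of_injective _ e.injective]
    refine card_le_cliqueNumOn hd ?_
    intro a ha b hb hab
    exact e.map_adj_iff.1 (h2 (Finset.mem_coe.2 (Finset.mem_image_of_mem e ha))
      (Finset.mem_coe.2 (Finset.mem_image_of_mem e hb)) (e.injective.ne hab))
  · obtain ⟨c, h1, h2, h3⟩ := exists_clique_card H s
    rw [← h3, ← Finset.card_image_of_injective c e.injective]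
    refine card_le_cliqueNumOn (by simpa using Set.image_mono h1) ?_
    rw [Finset.coe_image]
    rintro _ ⟨a, ha, rfl⟩ _ ⟨b, hb, rfl⟩ hab
    exact e.map_adj_iff.2 (h2 ha hb fun h => hab (h ▸ rfl))

/-- `G[X]` is perfect, phrased inside `V`: each `t ⊆ X` has a proper colouring by `ω(t)` colours,
given by a function on all of `V` that is only constrained on `t`. -/
def Perf (G : SimpleGraph V) (X : Set V) : Prop :=
  ∀ t ⊆ X, ∃ c : V → ℕ, (∀ v ∈ t, c v < cliqueNumOn G t) ∧
    ∀ u ∈ t, ∀ v ∈ t, G.Adj u v → c u ≠ c v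

lemma colorable_induce_iff (G : SimpleGraph V) (t : Set V) (n : ℕ) :
    (G.induce t).Colorable n ↔ ∃ c : V → ℕ, (∀ v ∈ t, c v < n) ∧
      ∀ u ∈ t, ∀ v ∈ t, G.Adj u v → c u ≠ c v := by
  classical
  constructor
  · rintro ⟨C⟩
    refine ⟨fun v => if h : v ∈ t then C ⟨v, h⟩ else 0, ?_, ?_⟩
    · intro v hv
      simp [hv]
    · intro u hu v hv huv h
      simp only [hu, hv, dif_pos] at h
      exact C.valid (v := ⟨u, hu⟩) (w := ⟨v, hv⟩) huv (Fin.ext h)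
  · rintro ⟨c, h1, h2⟩
    exact ⟨Coloring.mk (fun v => ⟨c v, h1 v v.2⟩) fun {u v} huv h =>
      h2 u u.2 v v.2 huv (by simpa using h)⟩

lemma chromaticNumber_induce_eq_iff [Fintype V] (G : SimpleGraph V) (t : Set V) :
    (G.induce t).chromaticNumber = (cliqueNumOn G t : ℕ∞) ↔
      (G.induce t).Colorable (cliqueNumOn G t) := by
  classical
  rw [← chromaticNumber_le_iff_colorable]
  refine ⟨fun h => h.le, fun h => le_antisymm h ?_⟩
  obtain ⟨c, h1, h2, h3⟩ := exists_clique_card G t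
  obtain ⟨d, rfl⟩ : ∃ d : Finset t, d.map (Function.Embedding.subtype _) = c :=
    ⟨c.subtype (· ∈ t), Finset.subtype_map_of_mem fun x hx => h1 hx⟩
  rw [← h3, Finset.card_map]
  refine IsClique.card_le_chromaticNumber ?_
  intro a ha b hb hab
  exact h2 (by simpa using ha) (by simpa using hb) fun h => hab (Subtype.ext h)

lemma isPerfect_iff_perf_image [Fintype V] [Fintype W] {H : SimpleGraph W} {G : SimpleGraph V}
    (e : H ↪g G) : IsPerfect H ↔ Perf G (Set.range e) := by
  have key : ∀ s : Set W, (H.induce s).chromaticNumber = (cliqueNumOn H s : ℕ∞) ↔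
      (G.induce (e '' s)).Colorable (cliqueNumOn G (e '' s)) := by
    intro s
    rw [chromaticNumber_induce_eq_iff, cliqueNumOn_image]
    let i : H.induce s ≃g G.induce (e '' s) :=
      ⟨Equiv.Set.image e s e.injective, by intro a b; simp⟩
    exact ⟨fun h => h.of_hom i.symm.toHom, fun h => h.of_hom i.toHom⟩
  constructor
  · intro h t ht
    obtain ⟨s, rfl⟩ := Set.subset_range_iff_exists_image_eq.1 ht
    exact (colorable_induce_iff _ _ _).1 ((key s).1 (h s))
  · intro h s
    exact (key s).2 ((colorable_induce_iff _ _ _).2 (h _ (Set.image_subset_range e s)))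

/-- A perfect graph stays perfect when a vertex with clique neighbourhood is added: such a vertex
`v` sees fewer than `ω` colours in any colouring, since its neighbours together with `v` form a
clique. -/
lemma Perf.insert [Fintype V] {G : SimpleGraph V} {A : Set V} (hA : Perf G A) (v : V)
    (hv : G.IsClique {u | u ∈ A ∧ G.Adj v u}) : Perf G (Insert.insert v A) := by
  classical
  intro t ht
  by_cases hvt : v ∈ t
  · obtain ⟨c, hc1, hc2⟩ := hA (t \ {v}) fun x hx => (ht hx.1).resolve_left hx.2
    set N : Finset V := Finset.univ.filter fun u => u ∈ t ∧ G.Adj v u with hN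
    have hvN : v ∉ N := by simp [hN]
    have hNA : ∀ u ∈ N, u ∈ A ∧ G.Adj v u := by
      intro u hu
      simp only [hN, Finset.mem_filter, Finset.mem_univ, true_and] at hu
      exact ⟨(ht hu.1).resolve_left hu.2.ne', hu.2⟩
    have hcard : (Insert.insert v N).card ≤ cliqueNumOn G t := by
      refine card_le_cliqueNumOn ?_ ?_
      · intro x hx
        simp only [Finset.coe_insert, Set.mem_insert_iff, Finset.mem_coe] at hx
        rcases hx with rfl | hx
        · exact hvt
        · simp only [hN, Finset.mem_filter] at hx
          exact hx.2.1
      · rw [Finset.coe_insert, isClique_insert]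
        exact ⟨fun a ha b hb hab => hv (hNA a ha) (hNA b hb) hab, fun b hb _ => (hNA b hb).2⟩
    rw [Finset.card_insert_of_notMem hvN] at hcard
    obtain ⟨m, hm1, hm2⟩ : ∃ m ∈ Finset.range (cliqueNumOn G t), m ∉ N.image c := by
      apply Finset.exists_mem_notMem_of_card_lt_card
      rw [Finset.card_range]
      exact lt_of_le_of_lt Finset.card_image_le hcard
    have hm : ∀ u ∈ t, G.Adj v u → c u ≠ m := by
      intro u hu hvu h
      exact hm2 (Finset.mem_image.2 ⟨u, by simp [hN, hu, hvu], h⟩)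
    refine ⟨Function.update c v m, ?_, ?_⟩
    · intro u hu
      by_cases huv : u = v
      · subst huv
        simpa using hm1
      · rw [Function.update_of_ne huv]
        exact (hc1 u ⟨hu, huv⟩).trans_le (cliqueNumOn_mono G Set.sdiff_subset)
    · intro a ha b hb hab
      by_cases h1 : a = v
      · subst h1
        rw [Function.update_self, Function.update_of_ne hab.ne']
        exact (hm b hb hab).symm
      · by_cases h2 : b = v
        · subst h2
          rw [Function.update_self, Function.update_of_ne h1]
          exact hm a ha hab.symm
        · rw [Function.update_of_ne h1, Function.update_of_ne h2]
          exact hc2 a ⟨ha, h1⟩ b ⟨hb, h2⟩ hab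
  · exact hA t fun x hx => (ht hx).resolve_left fun h => hvt (h ▸ hx)

/-! ### Partitions in minimally non-perfectly divisible graphs -/

lemma range_induce (G : SimpleGraph V) (s : Set V) :
    Set.range (Embedding.induce s : G.induce s ↪g G) = s :=
  Subtype.range_coe

/-- The set `T` splits into `A`, inducing a perfect graph, and `B` with `ω(B) < ω(T)`. -/
def HasPartition (G : SimpleGraph V) (T : Set V) : Prop :=
  ∃ A B : Set V, A ∪ B = T ∧ A ∩ B = ∅ ∧ Perf G A ∧ cliqueNumOn G B < cliqueNumOn G T

lemma MNPD.hasPartition [Fintype V] {G : SimpleGraph V} (h : MNPD G) {T : Set V}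
    (hT : T ≠ Set.univ) (hne : T.Nonempty) : HasPartition G T := by
  classical
  have : Nonempty T := hne.to_subtype
  obtain ⟨A, B, h1, h2, h3, h4⟩ := h.2 T hT Set.univ Set.univ_nonempty
  let e : G.induce T ↪g G := Embedding.induce T
  refine ⟨e '' A, e '' B, ?_, ?_, ?_, ?_⟩
  · rw [← Set.image_union, h1]
    rw [Set.image_univ, range_induce]
  · rw [← Set.image_inter e.injective, h2, Set.image_empty]
  · have := (isPerfect_iff_perf_image (e.comp (Embedding.induce A))).1 h3
    convert this using 1
    rw [Embedding.coe_comp, Set.range_comp, range_induce]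
  · rw [cliqueNumOn_image]
    have : e '' Set.univ = T := by rw [Set.image_univ, range_induce]
    rw [← cliqueNumOn_image e Set.univ, this] at h4
    exact h4

lemma MNPD.not_hasPartition_univ [Fintype V] {G : SimpleGraph V} (h : MNPD G) :
    ¬ HasPartition G Set.univ := by
  classical
  intro hu
  apply h.1
  intro s hs
  have : HasPartition G s := by
    by_cases h' : s = Set.univ
    · exact h' ▸ hu
    · exact h.hasPartition h' hs
  obtain ⟨A, B, h1, h2, h3, h4⟩ := this
  refine ⟨A, B, h1, h2, ?_, h4⟩
  rwa [isPerfect_iff_perf_image (Embedding.induce A), range_induce]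

/-- A minimally non-perfectly divisible graph with at least two vertices has no vertex whose
neighbourhood is a clique. -/
lemma no_simplicial [Fintype V] {G : SimpleGraph V} (h : MNPD G) {v u : V} (huv : u ≠ v)
    (hv : G.IsClique {u | G.Adj v u}) : False := by
  obtain ⟨A, B, h1, h2, h3, h4⟩ := h.hasPartition (T := {v}ᶜ) (by simp) ⟨u, huv⟩
  refine h.not_hasPartition_univ ⟨Insert.insert v A, B, ?_, ?_, ?_, ?_⟩
  · rw [Set.insert_union, h1]
    ext x
    simp [em]
  · have : v ∉ B := fun hB => (h1 ▸ Set.mem_union_right A hB : v ∈ ({v}ᶜ : Set V)) rfl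
    rw [Set.insert_inter_of_notMem this, h2]
  · exact h3.insert v fun a ha b hb hab => hv ha.2 hb.2 hab
  · exact h4.trans_le (cliqueNumOn_mono G (Set.subset_univ _))

/-- A minimally non-perfectly divisible graph has no clique `K` with `3 ≤ |K| < |V|` each of whose
vertices has at most one neighbour outside `K`. -/
lemma no_clique_with_matching [Fintype V] {G : SimpleGraph V} (h : MNPD G) {K : Finset V}
    (hK : G.IsClique (K : Set V)) (h3K : 3 ≤ K.card) {x : V} (hx : x ∉ K)
    (hone : ∀ k ∈ K, ∀ a ∉ K, ∀ b ∉ K, G.Adj k a → G.Adj k b → a = b)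
    (hout : ∀ a ∉ K, ∀ k ∈ K, ∀ l ∈ K, G.Adj k a → G.Adj l a → k = l) : False := by
  classical
  obtain ⟨k, hk⟩ : K.Nonempty := Finset.card_pos.1 (by omega)
  obtain ⟨A, B, h1, h2, h3, h4⟩ := h.hasPartition (T := (K : Set V)ᶜ)
    (by intro h'; exact (h' ▸ Set.mem_univ k : k ∈ (K : Set V)ᶜ) hk) ⟨x, hx⟩
  have hA : ∀ a ∈ A, a ∉ K := fun a ha => by
    have : a ∈ (K : Set V)ᶜ := h1 ▸ Or.inl ha
    simpa using this
  have hB : ∀ a ∈ B, a ∉ K := fun a ha => by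
    have : a ∈ (K : Set V)ᶜ := h1 ▸ Or.inr ha
    simpa using this
  refine h.not_hasPartition_univ ⟨Insert.insert k A, B ∪ ((K.erase k : Finset V) : Set V),
    ?_, ?_, ?_, ?_⟩
  · ext y
    have := Set.ext_iff.1 h1 y
    simp only [Set.mem_union, Set.mem_compl_iff, Finset.mem_coe] at this
    simp only [Set.mem_union, Set.mem_insert_iff, Finset.mem_coe, Finset.mem_erase,
      Set.mem_univ, iff_true]
    tauto
  · ext y
    have := Set.ext_iff.1 h2 y
    have h5 := hA y
    have h6 := hB y
    simp only [Set.mem_inter_iff, Set.mem_empty_iff_false, iff_false] at this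
    simp only [Set.mem_union, Set.mem_insert_iff, Finset.mem_coe, Finset.mem_erase,
      Set.mem_inter_iff, Set.mem_empty_iff_false, iff_false]
    rintro ⟨rfl | h7, h8⟩ <;> tauto
  · refine h3.insert k ?_
    intro a ha b hb hab
    exact absurd (hone k hk a (hA a ha.1) b (hA b hb.1) ha.2 hb.2) hab
  · have hKu : K.card ≤ cliqueNumOn G Set.univ := card_le_cliqueNumOn (Set.subset_univ _) hK
    have hBu : cliqueNumOn G B < cliqueNumOn G Set.univ :=
      h4.trans_le (cliqueNumOn_mono G (Set.subset_univ _))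
    obtain ⟨c, hc1, hc2, hc3⟩ := exists_clique_card G (B ∪ ((K.erase k : Finset V) : Set V))
    rw [← hc3]
    by_cases hcB : (c : Set V) ⊆ B
    · exact (card_le_cliqueNumOn hcB hc2).trans_lt hBu
    by_cases hcK : c ⊆ K.erase k
    · refine (Finset.card_le_card hcK).trans_lt ?_
      rw [Finset.card_erase_of_mem hk]
      omega
    -- A clique meeting both `K` and its complement is an edge `ya`.
    obtain ⟨y, hyc, hyB⟩ := Set.not_subset.1 hcB
    obtain ⟨a, hac, haK⟩ := Finset.not_subset.1 hcK
    have hyK : y ∈ K := Finset.mem_of_mem_erase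
      (Finset.mem_coe.1 ((hc1 hyc).resolve_left hyB))
    have haB : a ∈ B := (hc1 hac).resolve_right haK
    have haK' := hB a haB
    have hya : G.Adj y a := hc2 hyc hac fun h => haK' (h ▸ hyK)
    have hsub : c ⊆ {y, a} := by
      intro z hz
      rw [Finset.mem_insert, Finset.mem_singleton]
      by_contra hne
      push Not at hne
      have hyz := hc2 hyc hz hne.1.symm
      have haz := hc2 hac hz hne.2.symm
      by_cases hzK : z ∈ K
      · exact hne.1 (hout a haK' z hzK y hyK haz.symm hya)
      · exact hne.2 (hone y hyK z hzK a haK' hyz hya)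
    have := (Finset.card_le_card hsub).trans Finset.card_le_two
    omega

/-! ### Forbidden subgraphs around a maximal clique -/

lemma no_diamond {G : SimpleGraph V} (hd : IsFree G diamond) {a b c d : V} (hab : G.Adj a b)
    (hac : G.Adj a c) (had : G.Adj a d) (hbc : G.Adj b c) (hbd : G.Adj b d) (hcd : c ≠ d) :
    G.Adj c d := by
  by_contra h
  have hdc : ¬ G.Adj d c := fun h' => h h'.symm
  refine hd ⟨⟨![a, b, c, d], ?_⟩, ?_⟩
  · intro i j hij
    fin_cases i <;> fin_cases j <;>
      simp_all [hab.ne, hab.ne', hac.ne, hac.ne', had.ne, had.ne', hbc.ne, hbc.ne', hbd.ne,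
        hbd.ne', hcd.symm]
  · intro i j
    change G.Adj (![a, b, c, d] i) (![a, b, c, d] j) ↔ diamond.Adj i j
    fin_cases i <;> fin_cases j <;>
      simp [diamond, hab, hac, had, hbc, hbd, h, hdc, hab.symm, hac.symm, had.symm, hbc.symm,
        hbd.symm]

lemma no_bull {G : SimpleGraph V} (hb : IsFree G bull) {a b c d e : V} (hab : G.Adj a b)
    (hac : G.Adj a c) (hbc : G.Adj b c) (had : G.Adj a d) (hbe : G.Adj b e)
    (hbd : ¬ G.Adj b d) (hcd : ¬ G.Adj c d) (hae : ¬ G.Adj a e) (hce : ¬ G.Adj c e) :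
    G.Adj d e := by
  by_contra h
  have hcd' : c ≠ d := by rintro rfl; exact hbd hbc
  have hce' : c ≠ e := by rintro rfl; exact hae hac
  have hbd' : b ≠ d := by rintro rfl; exact hcd hbc.symm
  have hae' : a ≠ e := by rintro rfl; exact hce hac.symm
  have hde' : d ≠ e := by rintro rfl; exact hae had
  refine hb ⟨⟨![a, b, c, d, e], ?_⟩, ?_⟩
  · intro i j hij
    fin_cases i <;> fin_cases j <;>
      simp_all [hab.ne, hab.ne', hac.ne, hac.ne', had.ne, had.ne', hbc.ne, hbc.ne', hbe.ne,
        hbe.ne', hcd'.symm, hce'.symm, hbd'.symm, hae'.symm, hde'.symm]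
  · have hdb : ¬ G.Adj d b := fun h' => hbd h'.symm
    have hdc : ¬ G.Adj d c := fun h' => hcd h'.symm
    have hea : ¬ G.Adj e a := fun h' => hae h'.symm
    have hec : ¬ G.Adj e c := fun h' => hce h'.symm
    have hed : ¬ G.Adj e d := fun h' => h h'.symm
    intro i j
    change G.Adj (![a, b, c, d, e] i) (![a, b, c, d, e] j) ↔ bull.Adj i j
    fin_cases i <;> fin_cases j <;>
      simp [bull, hab, hac, had, hbc, hbe, h, hbd, hcd, hae, hce, hab.symm, hac.symm, had.symm,
        hbc.symm, hbe.symm, hdb, hdc, hea, hec, hed]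

end Helpers

/-- Every (bull, diamond)-free minimally non-perfectly divisible graph is triangle-free. -/
theorem bull_diamond_free_MNPD_triangleFree {V : Type*} [Fintype V] (G : SimpleGraph V)
    (hbull : IsFree G bull) (hdiamond : IsFree G diamond) (hmnpd : MNPD G) :
    IsFree G (SimpleGraph.cycleGraph 3) := by
  classical
  rintro ⟨f, hf⟩
  have h01 : G.Adj (f 0) (f 1) := (hf 0 1).2 (by decide)
  have h02 : G.Adj (f 0) (f 2) := (hf 0 2).2 (by decide)
  have h12 : G.Adj (f 1) (f 2) := (hf 1 2).2 (by decide)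
  have hT : G.IsNClique 3 {f 0, f 1, f 2} := is3Clique_triple_iff.2 ⟨h01, h02, h12⟩
  obtain ⟨K, hTK, hKmax⟩ := (Set.toFinite {t : Finset V | G.IsClique (t : Set V)}).exists_le_maximal
    (a := {f 0, f 1, f 2}) hT.isClique
  have hK : G.IsClique (K : Set V) := hKmax.prop
  have hK3 : 3 ≤ K.card := hT.card_eq ▸ Finset.card_le_card hTK
  -- By diamond-freeness an outside vertex with two neighbours in `K` would be adjacent to all of `K`.
  have hout : ∀ a ∉ K, ∀ k ∈ K, ∀ l ∈ K, G.Adj k a → G.Adj l a → k = l := by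
    intro a ha k hk l hl hka hla
    by_contra hkl
    have hins : G.IsClique ((insert a K : Finset V) : Set V) := by
      rw [Finset.coe_insert, isClique_insert]
      refine ⟨hK, fun b hb hab => ?_⟩
      by_cases hbk : b = k
      · exact hbk ▸ hka.symm
      by_cases hbl : b = l
      · exact hbl ▸ hla.symm
      exact no_diamond hdiamond (hK hk hl hkl) hka (hK hk hb (Ne.symm hbk)) hla
        (hK hl hb (Ne.symm hbl)) hab
    exact ha (hKmax.le_of_ge hins (Finset.subset_insert a K) (Finset.mem_insert_self a K))
  have hcomplete : ∀ k ∈ K, ∀ l ∈ K, k ≠ l → ∀ a ∉ K, ∀ b ∉ K, G.Adj k a → G.Adj l b →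
      G.Adj a b := by
    intro k hk l hl hkl a ha b hb hka hlb
    obtain ⟨m, hm, hmn⟩ : ∃ m ∈ K, m ∉ ({k, l} : Finset V) :=
      Finset.exists_mem_notMem_of_card_lt_card (Finset.card_le_two.trans_lt hK3)
    simp only [Finset.mem_insert, Finset.mem_singleton, not_or] at hmn
    exact no_bull hbull (hK hk hl hkl) (hK hk hm (Ne.symm hmn.1)) (hK hl hm (Ne.symm hmn.2))
      hka hlb (fun h => hkl (hout a ha k hk l hl hka h)) (fun h => hmn.1 (hout a ha m hm k hk h hka))
      (fun h => hkl (hout b hb k hk l hl h hlb)) (fun h => hmn.2 (hout b hb m hm l hl h hlb))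
  by_cases hsimp : ∃ k ∈ K, ∀ a ∉ K, ¬ G.Adj k a
  · obtain ⟨k, hk, hka⟩ := hsimp
    obtain ⟨l, hl, hlk⟩ := Finset.exists_mem_ne (by omega : 1 < K.card) k
    refine no_simplicial hmnpd hlk fun a ha b hb hab => hK ?_ ?_ hab
    · exact not_not.1 fun h => hka a h ha
    · exact not_not.1 fun h => hka b h hb
  · push Not at hsimp
    obtain ⟨x, hx, -⟩ := hsimp (f 0) (hTK (by simp))
    refine no_clique_with_matching hmnpd hK hK3 hx ?_ hout
    intro k hk a ha b hb hka hkb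
    by_contra hab
    -- With outside neighbours `p`, `q` of two further vertices of `K`: if `ab` is an edge, then
    -- `a, b, k, p` is a diamond, and otherwise `p, q, a, b` is.
    obtain ⟨l, hl, hlk⟩ := Finset.exists_mem_ne (by omega : 1 < K.card) k
    obtain ⟨m, hm, hmn⟩ : ∃ m ∈ K, m ∉ ({k, l} : Finset V) :=
      Finset.exists_mem_notMem_of_card_lt_card (Finset.card_le_two.trans_lt hK3)
    simp only [Finset.mem_insert, Finset.mem_singleton, not_or] at hmn
    obtain ⟨p, hp, hlp⟩ := hsimp l hl
    obtain ⟨q, hq, hmq⟩ := hsimp m hm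
    have hpa := hcomplete l hl k hk hlk p hp a ha hlp hka
    have hpb := hcomplete l hl k hk hlk p hp b hb hlp hkb
    have hqa := hcomplete m hm k hk hmn.1 q hq a ha hmq hka
    have hqb := hcomplete m hm k hk hmn.1 q hq b hb hmq hkb
    have hpq := hcomplete l hl m hm (Ne.symm hmn.2) p hp q hq hlp hmq
    have hadj := no_diamond hdiamond hpq hpa hpb hqa hqb hab
    have hkp := no_diamond hdiamond hadj hka.symm hpa.symm hkb.symm hpb.symm
      (fun h => hp (h ▸ hk))
    exact hlk (hout p hp l hl k hk hlp hkp)
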